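/- Let n ≥ 1 and 1 ≤ k ≤ n. For each i with 0 ≤ i ≤ n, the number of paths p in 𝒫(n,1,0) with exactly k descending runs and exactly i up steps below the x-axis equals the Narayana number (1/(n+1))·C(n+1,k)·C(n−1,k−1); in particular this count is independent of i. -/

import Mathlib

open Finset

/-- The sum of the first `m` entries of a sequence `p` of length `N` (the height `s_m`). -/
def psum {N : ℕ} (p : Fin N → ℤ) (m : ℕ) : ℤ :=
  ∑ j ∈ Finset.univ.filter (fun j : Fin N => (j : ℕ) < m), p j

/-!
Put an up step in front of a path with `n` up and `n` down steps and close the resulting word into a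
cycle of length `2 * n + 1` and total sum `1`. The descending runs of the path become those of the
cyclic word, so their number does not change under rotation, and the up steps of the path below the
axis become the up steps of the word, other than the first, that start on or below the axis.

Cut such a cyclic word before any of its `n + 1` up steps. The function
`j ↦ (2 * n + 1) * s_j - j` is, up to a constant, independent of the cut; it takes distinct values
at distinct positions, and it is nonpositive exactly where `s_j` is. Hence the number of up steps on
or below the axis is the rank of the chosen up step among all `n + 1` of them, and each value
`1, …, n + 1` occurs for exactly one cut. So the number of up steps below the axis is
equidistributed on `0, …, n` over the paths with `k` descending runs, and these are counted by
splitting off the first step.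
-/

namespace ChungFeller

section Rank

variable {α β : Type*} [LinearOrder β] {s : Finset α} {f : α → β}

theorem injOn_card_filter_le (hf : Set.InjOn f s) :
    Set.InjOn (fun u => #{x ∈ s | f x ≤ f u}) s := by
  have key {u v : α} (hv : v ∈ s) (huv : f u ≤ f v)
      (h : #{x ∈ s | f x ≤ f u} = #{x ∈ s | f x ≤ f v}) : f v ≤ f u := by
    have hsub : {x ∈ s | f x ≤ f u} ⊆ {x ∈ s | f x ≤ f v} :=
      monotone_filter_right s fun _ _ hx => hx.trans huv
    have hmem : v ∈ {x ∈ s | f x ≤ f u} :=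
      eq_of_subset_of_card_le hsub h.ge ▸ mem_filter.2 ⟨hv, le_rfl⟩
    exact (mem_filter.1 hmem).2
  intro u hu v hv h
  refine hf hu hv ?_
  rcases le_total (f u) (f v) with huv | hvu
  · exact huv.antisymm (key hv huv h)
  · exact (key hu hvu h.symm).antisymm hvu

theorem existsUnique_card_filter_le_eq (hf : Set.InjOn f s) {i : ℕ} (hi : 1 ≤ i) (his : i ≤ #s) :
    ∃! u, u ∈ s ∧ #{x ∈ s | f x ≤ f u} = i := by
  have hmaps : Set.MapsTo (fun u => #{x ∈ s | f x ≤ f u}) s (Icc 1 #s) := fun u hu =>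
    mem_Icc.2 ⟨card_pos.2 ⟨u, mem_filter.2 ⟨hu, le_rfl⟩⟩, card_filter_le _ _⟩
  obtain ⟨u, hu, rfl⟩ := surjOn_of_injOn_of_card_le _ hmaps (injOn_card_filter_le hf) (by simp)
    (mem_Icc.2 ⟨hi, his⟩)
  exact ⟨u, ⟨hu, rfl⟩, fun v ⟨hv, h⟩ => injOn_card_filter_le hf hv hu h⟩

end Rank

theorem card_mul_card_filter_of_existsUnique {ι X : Type*} [Fintype ι] (s : Finset X)
    (e : ι → Equiv.Perm X) (hs : ∀ u x, e u x ∈ s ↔ x ∈ s) (Q : X → Prop) [DecidablePred Q]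
    (hQ : ∀ x ∈ s, ∃! u, Q (e u x)) : Fintype.card ι * #{x ∈ s | Q x} = #s := by
  rw [← mul_one #s, ← card_univ]
  refine card_mul_eq_card_mul (fun u x => Q (e u x)) (fun u _ => ?_) (fun x hx => ?_)
  · exact card_equiv (e u) fun x => by simp [hs]
  · simpa [card_eq_one_iff_existsUnique] using hQ x hx

variable {N : ℕ}

section PartialSums

theorem psum_zero (f : Fin N → ℤ) : psum f 0 = 0 := by
  simp [psum]

theorem psum_eq_sum (f : Fin N → ℤ) : psum f N = ∑ x, f x := by
  simp [psum]

theorem psum_add_one (f : Fin N → ℤ) (x : Fin N) : psum f (x + 1) = psum f x + f x := by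
  have : ({j | (j : ℕ) < x + 1} : Finset (Fin N)) =
      insert x ({j | (j : ℕ) < x} : Finset (Fin N)) := by
    ext j
    simp only [mem_filter_univ, mem_insert, Fin.ext_iff]
    omega
  rw [psum, this, sum_insert (by simp), add_comm, psum]

theorem psum_cons_add_one (a : ℤ) (f : Fin N → ℤ) (m : ℕ) :
    psum (Fin.cons a f : Fin (N + 1) → ℤ) (m + 1) = a + psum f m := by
  simp [psum, sum_filter, Fin.sum_univ_succ]

end PartialSums

section CycleLemma

/-- The cyclic shift of a sequence that makes position `u` the first one. -/
def rotate {α : Type*} (u : Fin (N + 1)) : Equiv.Perm (Fin (N + 1) → α) :=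
  (Equiv.subRight u).arrowCongr (Equiv.refl α)

theorem rotate_apply {α : Type*} (u : Fin (N + 1)) (f : Fin (N + 1) → α) (x : Fin (N + 1)) :
    rotate u f x = f (x + u) :=
  rfl

/-- The partial sums of the sequence `(N + 1) * f - 1`. When `f` has total sum `1` this sequence has
total sum `0`, so that its partial sums do not depend on where the cycle is cut, up to a constant.
-/
def tiltedHeight (f : Fin (N + 1) → ℤ) (x : Fin (N + 1)) : ℤ :=
  (N + 1) * psum f x - x

theorem tiltedHeight_zero (f : Fin (N + 1) → ℤ) : tiltedHeight f 0 = 0 := by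
  simp [tiltedHeight, psum_zero]

theorem tiltedHeight_add_one {f : Fin (N + 1) → ℤ} (hf : ∑ x, f x = 1) (x : Fin (N + 1)) :
    tiltedHeight f (x + 1) = tiltedHeight f x + (N + 1) * f x - 1 := by
  induction x using Fin.lastCases with
  | last =>
    have hlast : psum f N + f (Fin.last N) = 1 := by
      rw [← hf, ← psum_eq_sum]
      exact (psum_add_one f (Fin.last N)).symm
    rw [Fin.last_add_one, tiltedHeight_zero, tiltedHeight, Fin.val_last]
    linear_combination -(N + 1 : ℤ) * hlast
  | cast x =>
    have hstep := psum_add_one f x.castSucc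
    rw [Fin.coeSucc_eq_succ, tiltedHeight, tiltedHeight]
    push_cast [Fin.val_succ, Fin.val_castSucc] at hstep ⊢
    rw [hstep]
    ring

theorem tiltedHeight_injective (f : Fin (N + 1) → ℤ) : Function.Injective (tiltedHeight f) := by
  intro x y h
  have hmod : (x : ℤ) ≡ y [ZMOD (N + 1 : ℕ)] :=
    Int.modEq_iff_dvd.2 ⟨psum f y - psum f x, by
      simp only [tiltedHeight] at h
      push_cast
      linear_combination h⟩
  exact Fin.ext ((Int.natCast_modEq_iff.1 hmod).eq_of_lt_of_lt x.2 y.2)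

theorem tiltedHeight_rotate {f : Fin (N + 1) → ℤ} (hf : ∑ x, f x = 1) (u x : Fin (N + 1)) :
    tiltedHeight (rotate u f) x = tiltedHeight f (x + u) - tiltedHeight f u := by
  have hrot : ∑ x, rotate u f x = 1 := by
    rw [← hf]
    exact Equiv.sum_comp (Equiv.addRight u) f
  induction x using Fin.induction with
  | zero => simp [tiltedHeight_zero]
  | succ x ih =>
    rw [← Fin.coeSucc_eq_succ, tiltedHeight_add_one hrot, ih, add_right_comm,
      tiltedHeight_add_one hf, rotate_apply]
    ring

theorem tiltedHeight_nonpos_iff {f : Fin (N + 1) → ℤ} {x : Fin (N + 1)} :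
    tiltedHeight f x ≤ 0 ↔ psum f x ≤ 0 := by
  have hx : (x : ℤ) < N + 1 := mod_cast x.2
  rw [tiltedHeight]
  constructor <;> intro h
  · by_contra! hpos
    nlinarith
  · nlinarith

-- By `tiltedHeight_rotate`, the number counted here is the rank of `u` among the positions
-- satisfying `P`, ordered by tilted height.
theorem existsUnique_rotate_card_nonpos_eq {f : Fin (N + 1) → ℤ} (hf : ∑ x, f x = 1)
    (P : Fin (N + 1) → Prop) [DecidablePred P] {i : ℕ} (hi : 1 ≤ i) (hiP : i ≤ #{x | P x}) :
    ∃! u, P u ∧ #{x | P (x + u) ∧ psum (rotate u f) x ≤ 0} = i := by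
  have hrank (u : Fin (N + 1)) : #{x | P (x + u) ∧ psum (rotate u f) x ≤ 0} =
      #{y ∈ {y | P y} | tiltedHeight f y ≤ tiltedHeight f u} :=
    card_equiv (Equiv.addRight u) fun x => by
      simp [← tiltedHeight_nonpos_iff, tiltedHeight_rotate hf]
  simpa only [hrank, mem_filter_univ] using
    existsUnique_card_filter_le_eq (tiltedHeight_injective f).injOn hi hiP

end CycleLemma

section Paths

/-- The paths with `N` steps, each of them an up step `1` or a down step `-1`. -/
def paths (N : ℕ) : Finset (Fin N → ℤ) :=
  Fintype.piFinset fun _ => {1, -1}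

/-- The number of up steps of a path. -/
def upCount (p : Fin N → ℤ) : ℕ :=
  #{x | p x = 1}

/-- The number of up steps of a path that lie below the axis. -/
def upsBelowCount (p : Fin N → ℤ) : ℕ :=
  #{x : Fin N | p x = 1 ∧ psum p x < 0}

/-- The number of up steps of a path that start on or below the axis. -/
def upsNonposCount (p : Fin N → ℤ) : ℕ :=
  #{x : Fin N | p x = 1 ∧ psum p x ≤ 0}

/-- The number of descending runs that start in a path `p` which is preceded by the step `q`. A run
is counted at its first step; the descending runs of `p` alone are those for `q = 1`. -/
def runCount (q : ℤ) (p : Fin N → ℤ) : ℕ :=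
  #{x : Fin N | p x = -1 ∧ (Fin.cons q p : Fin (N + 1) → ℤ) x.castSucc = 1}

/-- The number of descending runs of a path whose last step is followed by its first one. -/
def cyclicRunCount (w : Fin (N + 1) → ℤ) : ℕ :=
  #{x | w x = -1 ∧ w (x - 1) = 1}

theorem mem_paths {p : Fin N → ℤ} : p ∈ paths N ↔ ∀ x, p x = 1 ∨ p x = -1 := by
  simp [paths]

theorem card_filter_paths_succ (P : (Fin (N + 1) → ℤ) → Prop) [DecidablePred P] :
    #{p ∈ paths (N + 1) | P p} =
      #{p ∈ paths N | P (Fin.cons 1 p)} + #{p ∈ paths N | P (Fin.cons (-1) p)} := by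
  have hcons : paths (N + 1) =
      (({1, -1} : Finset ℤ) ×ˢ paths N).map (Fin.consEquiv fun _ => ℤ).toEmbedding := by
    simpa [paths, Fin.tail_def] using
      filter_piFinset_eq_map_consEquiv (fun _ : Fin (N + 1) => ({1, -1} : Finset ℤ)) fun _ => True
  simp only [hcons, card_filter, sum_map, sum_product]
  exact sum_pair (by decide)

theorem sum_add_eq_two_mul_upCount {p : Fin N → ℤ} (hp : p ∈ paths N) :
    ∑ x, p x + N = 2 * upCount p := by
  have hstep (x : Fin N) : p x + 1 = 2 * if p x = 1 then 1 else 0 := by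
    rcases mem_paths.1 hp x with h | h <;> simp [h]
  calc ∑ x, p x + N = ∑ x, (p x + 1) := by simp [sum_add_distrib]
    _ = 2 * upCount p := by simp only [hstep, upCount, ← mul_sum, sum_boole]

theorem upCount_cons (a : ℤ) (p : Fin N → ℤ) :
    upCount (Fin.cons a p : Fin (N + 1) → ℤ) = upCount p + if a = 1 then 1 else 0 := by
  simp only [upCount, Fin.card_filter_univ_succ, Fin.cons_zero, Fin.cons_succ]
  split_ifs <;> rfl

theorem runCount_cons (q a : ℤ) (p : Fin N → ℤ) :
    runCount q (Fin.cons a p : Fin (N + 1) → ℤ) =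
      runCount a p + if a = -1 ∧ q = 1 then 1 else 0 := by
  simp only [runCount, Fin.card_filter_univ_succ, Fin.cons_zero, Fin.cons_succ, Fin.castSucc_zero,
    Fin.castSucc_succ]
  split_ifs <;> rfl

theorem runCount_one_eq (p : Fin N → ℤ) :
    runCount 1 p = #{x | p x = -1 ∧ ∀ y : Fin N, (y : ℕ) + 1 = (x : ℕ) → p y = 1} := by
  rw [runCount]
  congr! 4 with x
  cases N with
  | zero => exact x.elim0
  | succ N =>
    induction x using Fin.cases with
    | zero => simp
    | succ x =>
      have heq (y : Fin (N + 1)) : (y : ℕ) + 1 = x.succ ↔ y = x.castSucc := by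
        simp [Fin.ext_iff]
      simp only [heq, Fin.castSucc_succ, Fin.cons_succ, forall_eq]

theorem cyclicRunCount_cons_one (p : Fin N → ℤ) :
    cyclicRunCount (Fin.cons 1 p : Fin (N + 1) → ℤ) = runCount 1 p := by
  have hpred (x : Fin N) : x.succ - 1 = x.castSucc := by
    rw [sub_eq_iff_eq_add, Fin.coeSucc_eq_succ]
  simp [cyclicRunCount, runCount, Fin.card_filter_univ_succ, hpred]

theorem upsNonposCount_cons_one (p : Fin N → ℤ) :
    upsNonposCount (Fin.cons 1 p : Fin (N + 1) → ℤ) = upsBelowCount p + 1 := by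
  have hlt (m : ℕ) : 1 + psum p m ≤ 0 ↔ psum p m < 0 := by
    rw [add_comm, Int.add_one_le_iff]
  simp [upsNonposCount, upsBelowCount, Fin.card_filter_univ_succ, psum_zero, psum_cons_add_one, hlt]

end Paths

section RunPaths

/-- The paths with `N` steps, `a` of them up, in which `k` descending runs start when they are
preceded by the step `q`. -/
def runPaths (q : ℤ) (N a k : ℕ) : Finset (Fin N → ℤ) :=
  {p ∈ paths N | upCount p = a ∧ runCount q p = k}

theorem card_runPaths_succ (q : ℤ) (N a k : ℕ) :
    #(runPaths q (N + 1) a k) =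
      #{p ∈ paths N | upCount p + 1 = a ∧ runCount 1 p = k} +
        #{p ∈ paths N | upCount p = a ∧ (runCount (-1) p + if q = 1 then 1 else 0) = k} := by
  simp [runPaths, card_filter_paths_succ, upCount_cons, runCount_cons]

theorem card_runPaths_neg_one_succ_zero (N k : ℕ) :
    #(runPaths (-1) (N + 1) 0 k) = #(runPaths (-1) N 0 k) := by
  rw [card_runPaths_succ]
  simp [runPaths]

theorem card_runPaths_neg_one_succ_succ (N a k : ℕ) :
    #(runPaths (-1) (N + 1) (a + 1) k) = #(runPaths 1 N a k) + #(runPaths (-1) N (a + 1) k) := by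
  rw [card_runPaths_succ]
  simp [runPaths]

theorem card_runPaths_one_succ_zero_zero (N : ℕ) : #(runPaths 1 (N + 1) 0 0) = 0 := by
  rw [card_runPaths_succ]
  simp

theorem card_runPaths_one_succ_succ_zero (N a : ℕ) :
    #(runPaths 1 (N + 1) (a + 1) 0) = #(runPaths 1 N a 0) := by
  rw [card_runPaths_succ]
  simp [runPaths]

theorem card_runPaths_one_succ_zero_succ (N k : ℕ) :
    #(runPaths 1 (N + 1) 0 (k + 1)) = #(runPaths (-1) N 0 k) := by
  rw [card_runPaths_succ]
  simp [runPaths]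

theorem card_runPaths_one_succ_succ_succ (N a k : ℕ) :
    #(runPaths 1 (N + 1) (a + 1) (k + 1)) =
      #(runPaths 1 N a (k + 1)) + #(runPaths (-1) N (a + 1) k) := by
  rw [card_runPaths_succ]
  simp [runPaths]

theorem upCount_eq_length_iff {p : Fin N → ℤ} : upCount p = N ↔ p = 1 := by
  have := card_filter_eq_iff (s := (univ : Finset (Fin N))) (p := fun x => p x = 1)
  simpa [upCount, funext_iff] using this

theorem card_runPaths_self (q : ℤ) (N k : ℕ) : #(runPaths q N N k) = if k = 0 then 1 else 0 := by
  have hrun : runCount q (1 : Fin N → ℤ) = 0 := by simp [runCount]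
  have hmem : (1 : Fin N → ℤ) ∈ paths N := mem_paths.2 fun _ => .inl rfl
  cases k with
  | zero =>
    rw [if_pos rfl, card_eq_one]
    refine ⟨1, ?_⟩
    ext p
    simp only [runPaths, mem_filter, mem_singleton, upCount_eq_length_iff]
    grind
  | succ k =>
    simp only [runPaths, upCount_eq_length_iff, k.succ_ne_zero, if_false, card_eq_zero,
      filter_eq_empty_iff]
    grind

theorem card_runPaths_one_zero (a b : ℕ) : #(runPaths 1 (a + b + 1) a 0) = 0 := by
  induction a with
  | zero => exact card_runPaths_one_succ_zero_zero _
  | succ a ih => rw [card_runPaths_one_succ_succ_zero, add_right_comm, ih]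

theorem card_runPaths_one_of_card_runPaths_neg_one {b : ℕ}
    (h : ∀ a k, #(runPaths (-1) (a + b) a k) = a.choose k * b.choose k) (a k : ℕ) :
    #(runPaths 1 (a + b + 1) a (k + 1)) = (a + 1).choose (k + 1) * b.choose k := by
  induction a with
  | zero =>
    rw [card_runPaths_one_succ_zero_succ, h]
    cases k <;> simp [Nat.choose_eq_zero_of_lt]
  | succ a ih =>
    rw [card_runPaths_one_succ_succ_succ, h, add_right_comm a 1 b, ih, Nat.choose_succ_succ (a + 1)]
    ring

theorem card_runPaths_neg_one (a b k : ℕ) :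
    #(runPaths (-1) (a + b) a k) = a.choose k * b.choose k := by
  induction b generalizing a k with
  | zero =>
    rw [add_zero, card_runPaths_self]
    cases k <;> simp
  | succ b ih =>
    rw [← add_assoc]
    cases a with
    | zero =>
      rw [card_runPaths_neg_one_succ_zero, ih]
      cases k <;> simp
    | succ a =>
      rw [card_runPaths_neg_one_succ_succ, ih, add_right_comm a 1 b]
      cases k with
      | zero => simp [card_runPaths_one_zero]
      | succ k =>
        rw [card_runPaths_one_of_card_runPaths_neg_one ih, Nat.choose_succ_succ b]
        ring

theorem card_runPaths_one (a b k : ℕ) :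
    #(runPaths 1 (a + b + 1) a (k + 1)) = (a + 1).choose (k + 1) * b.choose k :=
  card_runPaths_one_of_card_runPaths_neg_one (fun a k => card_runPaths_neg_one a b k) a k

end RunPaths

section Distribution

theorem upCount_rotate (u : Fin (N + 1)) (w : Fin (N + 1) → ℤ) :
    upCount (rotate u w) = upCount w :=
  card_equiv (Equiv.addRight u) fun x => by simp only [mem_filter_univ]; rfl

theorem cyclicRunCount_rotate (u : Fin (N + 1)) (w : Fin (N + 1) → ℤ) :
    cyclicRunCount (rotate u w) = cyclicRunCount w :=
  card_equiv (Equiv.addRight u) fun x => by simp [rotate_apply, sub_add_eq_add_sub]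

theorem rotate_mem_paths {u : Fin (N + 1)} {w : Fin (N + 1) → ℤ} :
    rotate u w ∈ paths (N + 1) ↔ w ∈ paths (N + 1) := by
  simp only [mem_paths, rotate_apply]
  exact (Equiv.addRight u).forall_congr_right (q := fun x => w x = 1 ∨ w x = -1)

/-- The paths with `N + 1` steps, `a` of them up, that have `k` descending runs when the last step
is followed by the first one. -/
def cyclicRunPaths (N a k : ℕ) : Finset (Fin (N + 1) → ℤ) :=
  {w ∈ paths (N + 1) | upCount w = a ∧ cyclicRunCount w = k}

theorem rotate_mem_cyclicRunPaths {a k : ℕ} {u : Fin (N + 1)} {w : Fin (N + 1) → ℤ} :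
    rotate u w ∈ cyclicRunPaths N a k ↔ w ∈ cyclicRunPaths N a k := by
  simp [cyclicRunPaths, rotate_mem_paths, upCount_rotate, cyclicRunCount_rotate]

theorem card_filter_upsBelowCount_eq (N a k i : ℕ) :
    #{p ∈ runPaths 1 N a k | upsBelowCount p = i} =
      #{w ∈ cyclicRunPaths N (a + 1) k | w 0 = 1 ∧ upsNonposCount w = i + 1} := by
  simp [runPaths, cyclicRunPaths, filter_filter, card_filter_paths_succ, upCount_cons,
    cyclicRunCount_cons_one, upsNonposCount_cons_one]

theorem existsUnique_rotate_upsNonposCount_eq {w : Fin (N + 1) → ℤ} (hw : ∑ x, w x = 1) {i : ℕ}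
    (hi : 1 ≤ i) (hiw : i ≤ upCount w) :
    ∃! u, rotate u w 0 = 1 ∧ upsNonposCount (rotate u w) = i := by
  have hzero (u : Fin (N + 1)) : rotate u w 0 = w u := by rw [rotate_apply, zero_add]
  simp only [hzero]
  exact existsUnique_rotate_card_nonpos_eq hw (fun x => w x = 1) hi hiw

theorem mul_card_filter_upsBelowCount {n i : ℕ} (hi : i ≤ n) (k : ℕ) :
    (2 * n + 1) * #{p ∈ runPaths 1 (2 * n) n k | upsBelowCount p = i} =
      #(cyclicRunPaths (2 * n) (n + 1) k) := by
  have hunique : ∀ w ∈ cyclicRunPaths (2 * n) (n + 1) k,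
      ∃! u, rotate u w 0 = 1 ∧ upsNonposCount (rotate u w) = i + 1 := fun w hw => by
    obtain ⟨hpath, hup, -⟩ := mem_filter.1 hw
    have hsum := sum_add_eq_two_mul_upCount hpath
    rw [hup] at hsum
    push_cast at hsum
    exact existsUnique_rotate_upsNonposCount_eq (by linarith) (by omega) (by omega)
  simpa [card_filter_upsBelowCount_eq] using
    card_mul_card_filter_of_existsUnique _ rotate (fun _ _ => rotate_mem_cyclicRunPaths) _ hunique

theorem upsBelowCount_le_upCount (p : Fin N → ℤ) : upsBelowCount p ≤ upCount p :=
  card_le_card <| monotone_filter_right _ fun _ _ h => h.1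

theorem card_filter_upsBelowCount_mul {n i : ℕ} (hi : i ≤ n) (k : ℕ) :
    #{p ∈ runPaths 1 (2 * n) n k | upsBelowCount p = i} * (n + 1) = #(runPaths 1 (2 * n) n k) := by
  have hmaps : ∀ p ∈ runPaths 1 (2 * n) n k, upsBelowCount p ∈ range (n + 1) := fun p hp => by
    obtain ⟨-, hup, -⟩ := mem_filter.1 hp
    have := upsBelowCount_le_upCount p
    exact mem_range.2 (by omega)
  have hconst : ∀ j ∈ range (n + 1), #{p ∈ runPaths 1 (2 * n) n k | upsBelowCount p = j} =
      #{p ∈ runPaths 1 (2 * n) n k | upsBelowCount p = i} := fun j hj =>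
    Nat.eq_of_mul_eq_mul_left (2 * n).succ_pos <|
      (mul_card_filter_upsBelowCount (mem_range_succ_iff.1 hj) k).trans
        (mul_card_filter_upsBelowCount hi k).symm
  rw [card_eq_sum_card_fiberwise hmaps, sum_congr rfl hconst]
  simp [mul_comm]

end Distribution

end ChungFeller

/-- Narayana–Chung–Feller theorem: among paths in 𝒫(n,1,0) with exactly `k`
descending runs (a descending run begins at a down step whose predecessor, if any,
is an up step), for each `0 ≤ i ≤ n` the number with exactly `i` up steps starting
strictly below the x-axis is the Narayana number `(1/(n+1))·C(n+1,k)·C(n-1,k-1)`. -/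
theorem narayana_chung_feller_descending_runs (n k : ℕ) (hn : 1 ≤ n) (hk1 : 1 ≤ k)
    (hk2 : k ≤ n) (i : ℕ) (hi : i ≤ n) :
    Nat.card {p : Fin (2*n) → ℤ //
      (∀ m, p m = 1 ∨ p m = -1) ∧
      (univ.filter (fun m => p m = 1)).card = n ∧
      (univ.filter (fun m : Fin (2*n) =>
        p m = -1 ∧ ∀ m' : Fin (2*n), (m' : ℕ) + 1 = (m : ℕ) → p m' = 1)).card = k ∧
      (univ.filter (fun m : Fin (2*n) => p m = 1 ∧ psum p (m : ℕ) < 0)).card = i }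
      * (n + 1) = Nat.choose (n+1) k * Nat.choose (n-1) (k-1) := by
  open ChungFeller in
  obtain ⟨b, rfl⟩ := Nat.exists_eq_add_of_le' hn
  obtain ⟨j, rfl⟩ := Nat.exists_eq_add_of_le' hk1
  calc
    _ = #{p ∈ runPaths 1 (2 * (b + 1)) (b + 1) (j + 1) | upsBelowCount p = i} * (b + 1 + 1) := by
      congr 1
      refine Nat.subtype_card _ fun p => ?_
      simp only [runPaths, mem_filter, mem_paths, runCount_one_eq, and_assoc, upCount,
        upsBelowCount]
    _ = #(runPaths 1 (2 * (b + 1)) (b + 1) (j + 1)) := card_filter_upsBelowCount_mul hi _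
    _ = (b + 1 + 1).choose (j + 1) * b.choose j := by
      rw [two_mul, ← add_assoc, card_runPaths_one]
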